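/- Fix an integer d ≥ 1, p ∈ (1,∞), δ ≥ 0, and let (μ_t)_{t≥0} be a convolution semigroup in 𝒫_p(ℝ^d) with 𝒲_p(μ_t, δ_0) → 0 as t ↓ 0. Then for every t ≥ 0 and every f ∈ C₀(ℝ^d), the decreasing pointwise limit 𝒮(t)f := lim_{n→∞} 𝒮^n(t)f exists, 𝒮(t) maps C₀(ℝ^d) to itself, 𝒮(t)∘𝒮(s) = 𝒮(t+s) for all s,t ≥ 0, and for every x ∈ ℝ^d the functional f ↦ 𝒮(t)f(x) is sublinear (𝒮(t)(f+g) ≤ 𝒮(t)f + 𝒮(t)g and 𝒮(t)(λf) = λ·𝒮(t)f for all λ ≥ 0), increasing (f ≤ g implies 𝒮(t)f ≤ 𝒮(t)g), maps the zero function to zero, and 𝒮(t) is contractive: ‖𝒮(t)f − 𝒮(t)g‖_∞ ≤ ‖f − g‖_∞ for all f, g ∈ C₀(ℝ^d). -/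

import Mathlib

open MeasureTheory Filter Topology ENNReal NNReal Set ZeroAtInfty
noncomputable section

/-- Euclidean space ℝ^d. -/
abbrev Ed (d : ℕ) := EuclideanSpace ℝ (Fin d)

/-- `𝒫_p(ℝ^d)`: Borel probability measures with finite `p`-th moment. -/
def MemPp {d : ℕ} (p : ℝ) (μ : Measure (Ed d)) : Prop :=
  IsProbabilityMeasure μ ∧ ∫⁻ x, (‖x‖₊ : ℝ≥0∞) ^ p ∂μ < ∞

/-- `γ` is a coupling of `μ` and `ν`. -/
def IsCoupling {d : ℕ} (γ : Measure (Ed d × Ed d)) (μ ν : Measure (Ed d)) : Prop :=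
  γ.map Prod.fst = μ ∧ γ.map Prod.snd = ν

/-- The `p`-Wasserstein distance `𝒲_p(μ, ν)`. -/
def Wp {d : ℕ} (p : ℝ) (μ ν : Measure (Ed d)) : ℝ :=
  (⨅ γ ∈ {γ : Measure (Ed d × Ed d) | IsCoupling γ μ ν},
    (∫⁻ q, (‖q.2 - q.1‖₊ : ℝ≥0∞) ^ p ∂γ) ^ (1 / p)).toReal

/-- The scaled penalty `φ_t(r) = t·φ(r/t)` for `t > 0`; `φ_0(0) = 0`, `φ_0(r) = ∞` for `r > 0`. -/
def phit (φ : ℝ≥0 → ℝ≥0∞) (t : ℝ) (r : ℝ≥0) : ℝ≥0∞ :=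
  if 0 < t then (t.toNNReal : ℝ≥0∞) * φ (r / t.toNNReal) else (if r = 0 then 0 else ∞)

/-- `φ` is a penalty function: lower semicontinuous, convex, increasing, not constant,
`φ(0) = 0`, and `x ↦ φ(x^{1/p})` is convex. -/
structure IsPenalty (p : ℝ) (φ : ℝ≥0 → ℝ≥0∞) : Prop where
  lsc : LowerSemicontinuous φ
  convex : ∀ a b l m : ℝ≥0, l + m = 1 →
    φ (l * a + m * b) ≤ (l : ℝ≥0∞) * φ a + (m : ℝ≥0∞) * φ b
  mono : Monotone φ
  not_const : ∃ a b, φ a ≠ φ b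
  map_zero : φ 0 = 0
  convex_rpow : ∀ a b l m : ℝ≥0, l + m = 1 →
    φ ((l * a + m * b) ^ (1 / p)) ≤ (l : ℝ≥0∞) * φ (a ^ (1 / p)) + (m : ℝ≥0∞) * φ (b ^ (1 / p))

/-- The convex conjugate `φ*(y) = sup_{x ≥ 0} (xy − φ(x))`. -/
def phiStar (φ : ℝ≥0 → ℝ≥0∞) (y : ℝ≥0) : ℝ≥0∞ :=
  ⨆ x : ℝ≥0, ((x * y : ℝ≥0) : ℝ≥0∞) - φ x

/-- The one-step operator `S(t)f(x) = sup_ν ( ∫ f(x+y) ν(dy) − φ_t(𝒲_p(μ_t, ν)) )`. -/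
def Sop {d : ℕ} (p : ℝ) (φ : ℝ≥0 → ℝ≥0∞) (μt : Measure (Ed d)) (t : ℝ)
    (f : Ed d → ℝ) (x : Ed d) : ℝ :=
  sSup { r : ℝ | ∃ ν : Measure (Ed d), MemPp p ν ∧ ∃ c : ℝ, 0 ≤ c ∧
    phit φ t (Wp p μt ν).toNNReal ≤ ENNReal.ofReal c ∧ r = (∫ y, f (x + y) ∂ν) - c }

/-- The iterated operator `𝒮ⁿ(t) = S(2⁻ⁿ)^{∘ k} ∘ S(t − k·2⁻ⁿ)`, `k = ⌊2ⁿ t⌋`. -/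
def SiterN {d : ℕ} (p : ℝ) (φ : ℝ≥0 → ℝ≥0∞) (μ : ℝ → Measure (Ed d)) (n : ℕ) (t : ℝ)
    (f : Ed d → ℝ) : Ed d → ℝ :=
  (fun g => Sop p φ (μ ((2 : ℝ) ^ n)⁻¹) ((2 : ℝ) ^ n)⁻¹ g)^[⌊(2:ℝ)^n * t⌋₊]
    (Sop p φ (μ (t - ⌊(2:ℝ)^n * t⌋₊ * ((2:ℝ)^n)⁻¹)) (t - ⌊(2:ℝ)^n * t⌋₊ * ((2:ℝ)^n)⁻¹) f)

/-- The limiting operator `𝒮(t)f = lim_n 𝒮ⁿ(t)f` (a decreasing limit, i.e. an infimum). -/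
def Slim {d : ℕ} (p : ℝ) (φ : ℝ≥0 → ℝ≥0∞) (μ : ℝ → Measure (Ed d)) (t : ℝ)
    (f : Ed d → ℝ) (x : Ed d) : ℝ :=
  ⨅ n : ℕ, SiterN p φ μ n t f x

/-- `f ∈ C₀(ℝ^d)`: continuous and vanishing at infinity. -/
def IsC0 {d : ℕ} (f : Ed d → ℝ) : Prop :=
  Continuous f ∧ Tendsto f (cocompact (Ed d)) (𝓝 0)

/-- `(μ_t)_{t ≥ 0}` is a convolution semigroup in `𝒫_p(ℝ^d)`. -/
def IsConvSemigroup {d : ℕ} (p : ℝ) (μ : ℝ → Measure (Ed d)) : Prop :=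
  μ 0 = Measure.dirac 0 ∧ (∀ s t : ℝ, 0 ≤ s → 0 ≤ t → μ (s + t) = (μ s).conv (μ t)) ∧
    ∀ t : ℝ, 0 ≤ t → MemPp p (μ t)

/-- `𝒲_p(μ_t, δ_0) → 0` as `t ↓ 0`. -/
def WContinuousAtZero {d : ℕ} (p : ℝ) (μ : ℝ → Measure (Ed d)) : Prop :=
  Tendsto (fun t => Wp p (μ t) (Measure.dirac 0)) (𝓝[>] (0:ℝ)) (𝓝 0)

/-- The semigroup of the underlying Lévy process, `S^μ(t)f(x) = ∫ f(x+y) μ_t(dy)`. -/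
def Smu {d : ℕ} (μ : ℝ → Measure (Ed d)) (t : ℝ) (f : Ed d → ℝ) (x : Ed d) : ℝ :=
  ∫ y, f (x + y) ∂(μ t)

/-- `f ∈ D(A^μ)` with `A^μ f = Af`: `(S^μ(t)f − f)/t → Af` uniformly as `t ↓ 0`. -/
def HasGenerator {d : ℕ} (μ : ℝ → Measure (Ed d)) (f Af : Ed d → ℝ) : Prop :=
  TendstoUniformly (fun t x => (Smu μ t f x - f x) / t) Af (𝓝[>] (0:ℝ))

/-- `f ∈ C₀¹(ℝ^d)`: continuously differentiable, vanishing at infinity, with gradient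
vanishing at infinity. -/
def IsC01 {d : ℕ} (f : Ed d → ℝ) : Prop :=
  IsC0 f ∧ ContDiff ℝ 1 f ∧ Tendsto (fun x => gradient f x) (cocompact (Ed d)) (𝓝 0)


/-- The one-step operator with Wasserstein-ball constraint:
`S(t)f(x) = sup { ∫ f(x+y) ν(dy) : ν ∈ 𝒫_p(ℝ^d), 𝒲_p(μ_t, ν) ≤ δ·t }`. -/
def SopD {d : ℕ} (p δ : ℝ) (μt : Measure (Ed d)) (t : ℝ) (f : Ed d → ℝ) (x : Ed d) : ℝ :=
  sSup { r : ℝ | ∃ ν : Measure (Ed d), MemPp p ν ∧ Wp p μt ν ≤ δ * t ∧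
    r = ∫ y, f (x + y) ∂ν }

/-- The iterated operator `𝒮ⁿ(t) = S(2⁻ⁿ)^{∘ k} ∘ S(t − k·2⁻ⁿ)`, `k = ⌊2ⁿ t⌋`. -/
def SiterND {d : ℕ} (p δ : ℝ) (μ : ℝ → Measure (Ed d)) (n : ℕ) (t : ℝ)
    (f : Ed d → ℝ) : Ed d → ℝ :=
  (fun g => SopD p δ (μ ((2 : ℝ) ^ n)⁻¹) ((2 : ℝ) ^ n)⁻¹ g)^[⌊(2:ℝ)^n * t⌋₊]
    (SopD p δ (μ (t - ⌊(2:ℝ)^n * t⌋₊ * ((2:ℝ)^n)⁻¹)) (t - ⌊(2:ℝ)^n * t⌋₊ * ((2:ℝ)^n)⁻¹) f)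

/-- The limiting operator `𝒮(t)f = lim_n 𝒮ⁿ(t)f` (a decreasing limit, i.e. an infimum). -/
def SlimD {d : ℕ} (p δ : ℝ) (μ : ℝ → Measure (Ed d)) (t : ℝ)
    (f : Ed d → ℝ) (x : Ed d) : ℝ :=
  ⨅ n : ℕ, SiterND p δ μ n t f x

/-!
If `Y` has law within `𝒲_p`-distance `δs` of `μ_s` and `Z`, given `Y`, has law within distance `δt`
of `μ_t`, then gluing nearly optimal couplings and applying Minkowski's inequality shows that
`Y + Z` has law within distance `δ(s + t)` of `μ_s ∗ μ_t = μ_{s+t}`. Choosing the law of `Z`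
measurably and almost optimally yields `S(s)S(t)f ≤ S(s + t)f`, so `𝒮ⁿ(t)f` decreases when the
dyadic grid is refined. Every operator involved is contractive and commutes with translations,
hence preserves moduli of continuity, and the limit is squeezed between `-𝒮⁰(t)(-f)` and `𝒮⁰(t)f`;
it is therefore again in `C₀`. By Dini's theorem the convergence is uniform. Since `S(h)f → f`
uniformly as `h ↓ 0`, neither the incomplete last step nor the at most one step by which
`⌊2ⁿ(t + s)⌋` exceeds `⌊2ⁿt⌋ + ⌊2ⁿs⌋` matters in the limit, which gives the semigroup property.
-/

/-! ### Functions vanishing at infinity -/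

namespace IsC0

variable {d : ℕ} {f g : Ed d → ℝ}

lemma exists_coe_eq (hf : IsC0 f) : ∃ F : C₀(Ed d, ℝ), ⇑F = f :=
  ⟨⟨⟨f, hf.1⟩, hf.2⟩, rfl⟩

lemma coe (F : C₀(Ed d, ℝ)) : IsC0 (⇑F) :=
  ⟨F.continuous, zero_at_infty F⟩

lemma zero : IsC0 (0 : Ed d → ℝ) :=
  coe (0 : C₀(Ed d, ℝ))

lemma add (hf : IsC0 f) (hg : IsC0 g) : IsC0 (f + g) := by
  obtain ⟨F, rfl⟩ := hf.exists_coe_eq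
  obtain ⟨G, rfl⟩ := hg.exists_coe_eq
  exact coe (F + G)

lemma smul (hf : IsC0 f) (l : ℝ) : IsC0 (l • f) := by
  obtain ⟨F, rfl⟩ := hf.exists_coe_eq
  exact coe (l • F)

lemma neg (hf : IsC0 f) : IsC0 (-f) := by
  obtain ⟨F, rfl⟩ := hf.exists_coe_eq
  exact coe (-F)

lemma sub (hf : IsC0 f) (hg : IsC0 g) : IsC0 (f - g) := by
  obtain ⟨F, rfl⟩ := hf.exists_coe_eq
  obtain ⟨G, rfl⟩ := hg.exists_coe_eq
  exact coe (F - G)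

lemma comp_add_left (hf : IsC0 f) (a : Ed d) : IsC0 (fun x => f (a + x)) :=
  ⟨hf.1.comp (continuous_const_add a),
    hf.2.comp (Homeomorph.addLeft a).isClosedEmbedding.tendsto_cocompact⟩

lemma exists_abs_le (hf : IsC0 f) : ∃ M, 0 ≤ M ∧ ∀ x, |f x| ≤ M := by
  obtain ⟨F, rfl⟩ := hf.exists_coe_eq
  exact ⟨‖F.toBCF‖, norm_nonneg _, F.toBCF.norm_coe_le_norm⟩

lemma uniformContinuous (hf : IsC0 f) : UniformContinuous f := by
  obtain ⟨F, rfl⟩ := hf.exists_coe_eq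
  exact ZeroAtInftyContinuousMap.uniformContinuous F

lemma integrable_comp (hf : IsC0 f) {Ω : Type*} [MeasurableSpace Ω] {P : Measure Ω}
    [IsFiniteMeasure P] {X : Ω → Ed d} (hX : Measurable X) :
    Integrable (fun ω => f (X ω)) P := by
  obtain ⟨M, -, hM⟩ := hf.exists_abs_le
  exact .of_bound (hf.1.measurable.comp hX).aestronglyMeasurable M (.of_forall fun _ => hM _)

lemma continuous_integral_add (hf : IsC0 f) (ν : Measure (Ed d)) [IsFiniteMeasure ν] :
    Continuous fun x => ∫ y, f (x + y) ∂ν := by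
  obtain ⟨M, -, hM⟩ := hf.exists_abs_le
  exact continuous_of_dominated
    (fun _ => (hf.1.comp (continuous_const_add _)).aestronglyMeasurable)
    (fun _ => .of_forall fun _ => hM _) (integrable_const M)
    (.of_forall fun y => hf.1.comp (continuous_add_const y))

lemma exists_abs_sub_le_add_mul_norm (hf : IsC0 f) {ε : ℝ} (hε : 0 < ε) :
    ∃ C, 0 ≤ C ∧ ∀ a b, |f a - f b| ≤ ε + C * ‖a - b‖ := by
  obtain ⟨M, hM0, hM⟩ := hf.exists_abs_le
  obtain ⟨θ, hθ, hfθ⟩ := Metric.uniformContinuous_iff.1 hf.uniformContinuous ε hε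
  refine ⟨2 * M / θ, by positivity, fun a b => ?_⟩
  rcases lt_or_ge (dist a b) θ with hab | hab
  · have : |f a - f b| < ε := hfθ hab
    have : 0 ≤ 2 * M / θ * ‖a - b‖ := by positivity
    linarith
  · rw [dist_eq_norm] at hab
    calc |f a - f b| ≤ |f a| + |f b| := abs_sub _ _
      _ ≤ 2 * M / θ * θ := by rw [div_mul_cancel₀ _ hθ.ne']; linarith [hM a, hM b]
      _ ≤ 2 * M / θ * ‖a - b‖ := by gcongr
      _ ≤ ε + 2 * M / θ * ‖a - b‖ := by linarith

lemma eventually_abs_le_add_mul_norm (hf : IsC0 f) {ε C : ℝ} (hε : 0 < ε) (hC : 0 < C) :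
    ∀ᶠ x in cocompact (Ed d), ∀ y, |f (x + y)| ≤ ε + C * ‖y‖ := by
  obtain ⟨M, -, hM⟩ := hf.exists_abs_le
  have hsmall : ∀ᶠ z in cocompact (Ed d), |f z| < ε := by
    simpa [Real.dist_eq] using Metric.tendsto_nhds.1 hf.2 ε hε
  rw [← Metric.cobounded_eq_cocompact, hasBasis_cobounded_norm.eventually_iff] at hsmall
  obtain ⟨R, -, hR⟩ := hsmall
  filter_upwards [tendsto_norm_cocompact_atTop.eventually_ge_atTop (R + M / C)] with x hx y
  rcases le_or_gt (M / C) ‖y‖ with hy | hy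
  · have : M ≤ C * ‖y‖ := by rwa [div_le_iff₀' hC] at hy
    linarith [hM (x + y)]
  · have : R ≤ ‖x + y‖ := by linarith [norm_le_add_norm_add x y]
    have : 0 ≤ C * ‖y‖ := by positivity
    linarith [hR ‹R ≤ ‖x + y‖›]

end IsC0

lemma tendstoUniformly_of_antitone_of_tendsto_cocompact {X : Type*} [TopologicalSpace X]
    {F : ℕ → X → ℝ} {f : X → ℝ} (hF : ∀ n, Continuous (F n)) (hf : Continuous f)
    (hanti : ∀ x, Antitone fun n => F n x)
    (hlim : ∀ x, Tendsto (fun n => F n x) atTop (𝓝 (f x)))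
    (hF0 : Tendsto (F 0) (cocompact X) (𝓝 0)) (hf0 : Tendsto f (cocompact X) (𝓝 0)) :
    TendstoUniformly F f atTop := by
  rw [Metric.tendstoUniformly_iff]
  intro ε hε
  have hsmall : ∀ᶠ x in cocompact X, F 0 x - f x < ε :=
    (hF0.sub hf0).eventually_lt_const (by simpa using hε)
  obtain ⟨K, hK, hKε⟩ := mem_cocompact.1 hsmall
  have hunif := Antitone.tendstoUniformlyOn_of_forall_tendsto hK
    (fun n => (hF n).continuousOn) (fun x _ => hanti x) hf.continuousOn fun x _ => hlim x
  filter_upwards [Metric.tendstoUniformlyOn_iff.1 hunif ε hε] with n hn x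
  by_cases hx : x ∈ K
  · exact hn x hx
  · have hlower : f x ≤ F n x := (hanti x).le_of_tendsto (hlim x) n
    have hupper : F n x ≤ F 0 x := hanti x n.zero_le
    have : F 0 x - f x < ε := hKε hx
    rw [dist_comm, Real.dist_eq, abs_of_nonneg (by linarith)]
    linarith

/-! ### Sublinear Markov operators -/

/-- Translation-equivariant sublinear sub-Markov operators on `C₀(ℝ^d)`: the one-step operators
`S(t)`, their iterates and the limits `𝒮(t)` are all of this kind. Operators act on arbitrary
functions, and nothing is required off `C₀(ℝ^d)`; continuity of `A f` is not a field because it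
follows from equivariance and contractivity. -/
structure IsSublinearMarkov {d : ℕ} (A : (Ed d → ℝ) → Ed d → ℝ) : Prop where
  map_add_le : ∀ {f g}, IsC0 f → IsC0 g → A (f + g) ≤ A f + A g
  map_smul : ∀ {f}, IsC0 f → ∀ {l : ℝ}, 0 ≤ l → A (l • f) = l • A f
  map_le_const : ∀ {f}, IsC0 f → ∀ {c}, (∀ x, f x ≤ c) → ∀ x, A f x ≤ c
  map_translate : ∀ {f}, IsC0 f → ∀ a x, A (fun y => f (a + y)) x = A f (a + x)
  tendsto_zero : ∀ {f}, IsC0 f → Tendsto (A f) (cocompact (Ed d)) (𝓝 0)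

namespace IsSublinearMarkov

variable {d : ℕ} {A B : (Ed d → ℝ) → Ed d → ℝ} {f g : Ed d → ℝ}

lemma map_zero (hA : IsSublinearMarkov A) : A 0 = 0 := by
  simpa using hA.map_smul IsC0.zero le_rfl

lemma neg_map_neg_le (hA : IsSublinearMarkov A) (hf : IsC0 f) : -A (-f) ≤ A f := by
  have h := hA.map_add_le hf hf.neg
  rw [add_neg_cancel, hA.map_zero] at h
  exact neg_le_iff_add_nonneg.2 h

lemma map_le_add_const (hA : IsSublinearMarkov A) (hf : IsC0 f) (hg : IsC0 g) {c : ℝ}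
    (h : ∀ x, f x ≤ g x + c) (x : Ed d) : A f x ≤ A g x + c := by
  have hadd : A f x ≤ A g x + A (f - g) x := by
    simpa using hA.map_add_le hg (hf.sub hg) x
  have hconst : A (f - g) x ≤ c :=
    hA.map_le_const (hf.sub hg) (fun y => sub_le_iff_le_add'.2 (h y)) x
  linarith

lemma map_mono (hA : IsSublinearMarkov A) (hf : IsC0 f) (hg : IsC0 g) (h : f ≤ g) :
    A f ≤ A g := fun x => by
  simpa using hA.map_le_add_const hf hg (c := 0) (fun y => by simpa using h y) x

lemma abs_map_sub_map_le (hA : IsSublinearMarkov A) (hf : IsC0 f) (hg : IsC0 g) {c : ℝ}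
    (h : ∀ x, |f x - g x| ≤ c) (x : Ed d) : |A f x - A g x| ≤ c := by
  have hfg := hA.map_le_add_const hf hg (fun y => by linarith [(abs_le.1 (h y)).2]) x
  have hgf := hA.map_le_add_const hg hf (fun y => by linarith [(abs_le.1 (h y)).1]) x
  exact abs_le.2 ⟨by linarith, by linarith⟩

lemma uniformContinuous (hA : IsSublinearMarkov A) (hf : IsC0 f) : UniformContinuous (A f) := by
  rw [Metric.uniformContinuous_iff_le]
  intro ε hε
  obtain ⟨η, hη, hfη⟩ := Metric.uniformContinuous_iff_le.1 hf.uniformContinuous ε hε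
  refine ⟨η, hη, fun {a b} hab => ?_⟩
  have hshift : ∀ y, |f (a - b + y) - f y| ≤ ε := fun y =>
    hfη (by simpa [dist_eq_norm] using hab)
  have hcontr := hA.abs_map_sub_map_le (hf.comp_add_left (a - b)) hf hshift b
  rwa [hA.map_translate hf, sub_add_cancel] at hcontr

lemma isC0 (hA : IsSublinearMarkov A) (hf : IsC0 f) : IsC0 (A f) :=
  ⟨(hA.uniformContinuous hf).continuous, hA.tendsto_zero hf⟩

lemma id : IsSublinearMarkov (id : (Ed d → ℝ) → Ed d → ℝ) where
  map_add_le _ _ := le_rfl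
  map_smul _ _ _ := rfl
  map_le_const _ _ h := h
  map_translate _ _ _ := rfl
  tendsto_zero hf := hf.2

lemma comp (hA : IsSublinearMarkov A) (hB : IsSublinearMarkov B) :
    IsSublinearMarkov (A ∘ B) where
  map_add_le hf hg :=
    (hA.map_mono (hB.isC0 (hf.add hg)) ((hB.isC0 hf).add (hB.isC0 hg))
      (hB.map_add_le hf hg)).trans (hA.map_add_le (hB.isC0 hf) (hB.isC0 hg))
  map_smul hf l hl := by
    simp only [Function.comp_apply, hB.map_smul hf hl, hA.map_smul (hB.isC0 hf) hl]
  map_le_const hf _ h := hA.map_le_const (hB.isC0 hf) (hB.map_le_const hf h)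
  map_translate hf a x := by
    simp only [Function.comp_apply, funext (hB.map_translate hf a), hA.map_translate (hB.isC0 hf)]
  tendsto_zero hf := hA.tendsto_zero (hB.isC0 hf)

lemma iterate (hA : IsSublinearMarkov A) (k : ℕ) : IsSublinearMarkov A^[k] := by
  induction k with
  | zero => exact id
  | succ k ih => exact ih.comp hA

lemma of_antitone_tendsto {A : ℕ → (Ed d → ℝ) → Ed d → ℝ} (hA : ∀ n, IsSublinearMarkov (A n))
    (hanti : ∀ {f}, IsC0 f → ∀ x, Antitone fun n => A n f x)
    (hlim : ∀ {f}, IsC0 f → ∀ x, Tendsto (fun n => A n f x) atTop (𝓝 (B f x))) :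
    IsSublinearMarkov B where
  map_add_le hf hg x := le_of_tendsto_of_tendsto' (hlim (hf.add hg) x)
    ((hlim hf x).add (hlim hg x)) fun n => (hA n).map_add_le hf hg x
  map_smul {f} hf l hl := funext fun x =>
    tendsto_nhds_unique (hlim (hf.smul l) x) <| ((hlim hf x).const_mul l).congr fun n =>
      (congrFun ((hA n).map_smul hf hl) x).symm
  map_le_const hf _ h x := le_of_tendsto' (hlim hf x) fun n => (hA n).map_le_const hf h x
  map_translate hf a x := tendsto_nhds_unique (hlim (hf.comp_add_left a) x) <|
    (hlim hf (a + x)).congr fun n => ((hA n).map_translate hf a x).symm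
  tendsto_zero {f} hf := by
    have hlower : ∀ x, -A 0 (-f) x ≤ B f x := fun x => ge_of_tendsto' (hlim hf x) fun n =>
      (neg_le_neg (hanti hf.neg x n.zero_le)).trans ((hA n).neg_map_neg_le hf x)
    have hupper : ∀ x, B f x ≤ A 0 f x := fun x => (hanti hf x).le_of_tendsto (hlim hf x) 0
    exact tendsto_of_tendsto_of_tendsto_of_le_of_le
      (by simpa using ((hA 0).tendsto_zero hf.neg).neg) ((hA 0).tendsto_zero hf) hlower hupper

lemma tendstoUniformly_map_sub_map {ι : Type*} {l : Filter ι} {A : ι → (Ed d → ℝ) → Ed d → ℝ}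
    {u : ι → Ed d → ℝ} (hA : ∀ i, IsSublinearMarkov (A i)) (hu : ∀ i, IsC0 (u i)) (hg : IsC0 g)
    (hlim : TendstoUniformly u g l) :
    TendstoUniformly (fun i => A i (u i) - A i g) 0 l := by
  rw [Metric.tendstoUniformly_iff] at hlim ⊢
  intro ε hε
  filter_upwards [hlim (ε / 2) (half_pos hε)] with i hi x
  have hclose : ∀ y, |u i y - g y| ≤ ε / 2 := fun y => by
    rw [← Real.dist_eq, dist_comm]
    exact (hi y).le
  rw [dist_comm, Real.dist_eq, Pi.zero_apply, sub_zero]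
  exact ((hA i).abs_map_sub_map_le (hu i) hg hclose x).trans_lt (half_lt_self hε)

end IsSublinearMarkov

/-! ### Upper expectations -/

/-- The upper expectation `x ↦ sup_{ν ∈ 𝒬} ∫ f(x + y) ν(dy)` over a family `𝒬` of laws of an
increment. The supremum is meaningful for nonempty `𝒬` and bounded `f` only. -/
def upperExpectation {d : ℕ} (𝒬 : Set (Measure (Ed d))) (f : Ed d → ℝ) (x : Ed d) : ℝ :=
  sSup ((fun ν => ∫ y, f (x + y) ∂ν) '' 𝒬)

/-- `𝒬` is a nonempty family of probability measures on `ℝ^d` whose first absolute moments are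
bounded by `m`. -/
structure HasFirstMomentLE {d : ℕ} (𝒬 : Set (Measure (Ed d))) (m : ℝ) : Prop where
  nonempty : 𝒬.Nonempty
  isProbabilityMeasure : ∀ ν ∈ 𝒬, IsProbabilityMeasure ν
  integrable_norm : ∀ ν ∈ 𝒬, Integrable (fun y => ‖y‖) ν
  integral_norm_le : ∀ ν ∈ 𝒬, ∫ y, ‖y‖ ∂ν ≤ m

section UpperExpectation

variable {d : ℕ} {𝒬 : Set (Measure (Ed d))} {f g : Ed d → ℝ}

lemma upperExpectation_le (h𝒬 : 𝒬.Nonempty) {x : Ed d} {c : ℝ}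
    (h : ∀ ν ∈ 𝒬, ∫ y, f (x + y) ∂ν ≤ c) : upperExpectation 𝒬 f x ≤ c :=
  csSup_le (h𝒬.image _) (forall_mem_image.2 h)

lemma le_upperExpectation (h𝒬 : ∀ ν ∈ 𝒬, IsProbabilityMeasure ν) (hf : IsC0 f)
    {ν : Measure (Ed d)} (hν : ν ∈ 𝒬) (x : Ed d) :
    ∫ y, f (x + y) ∂ν ≤ upperExpectation 𝒬 f x := by
  obtain ⟨M, -, hM⟩ := hf.exists_abs_le
  refine le_csSup ⟨M, forall_mem_image.2 fun ν hν => ?_⟩ (mem_image_of_mem _ hν)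
  have := h𝒬 ν hν
  simpa using integral_mono (hf.integrable_comp (P := ν) (measurable_const_add x))
    (integrable_const M) fun y => (le_abs_self _).trans (hM (x + y))

lemma upperExpectation_comp_add_left (a x : Ed d) :
    upperExpectation 𝒬 (fun y => f (a + y)) x = upperExpectation 𝒬 f (a + x) := by
  simp only [upperExpectation, add_assoc]

lemma upperExpectation_smul {l : ℝ} (hl : 0 ≤ l) :
    upperExpectation 𝒬 (l • f) = l • upperExpectation 𝒬 f := by
  ext x
  simp only [upperExpectation, Pi.smul_apply, integral_smul]
  rw [← Real.sSup_smul_of_nonneg hl, ← image_smul, image_image]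

lemma upperExpectation_add_le (h𝒬 : ∀ ν ∈ 𝒬, IsProbabilityMeasure ν) (hne : 𝒬.Nonempty)
    (hf : IsC0 f) (hg : IsC0 g) :
    upperExpectation 𝒬 (f + g) ≤ upperExpectation 𝒬 f + upperExpectation 𝒬 g :=
  fun x => upperExpectation_le hne fun ν hν => by
    have := h𝒬 ν hν
    calc ∫ y, (f + g) (x + y) ∂ν = ∫ y, f (x + y) ∂ν + ∫ y, g (x + y) ∂ν :=
          integral_add (hf.integrable_comp (measurable_const_add x))
            (hg.integrable_comp (measurable_const_add x))
      _ ≤ upperExpectation 𝒬 f x + upperExpectation 𝒬 g x :=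
          add_le_add (le_upperExpectation h𝒬 hf hν x) (le_upperExpectation h𝒬 hg hν x)

lemma upperExpectation_le_const (h𝒬 : ∀ ν ∈ 𝒬, IsProbabilityMeasure ν) (hne : 𝒬.Nonempty)
    (hf : IsC0 f) {c : ℝ} (h : ∀ x, f x ≤ c) (x : Ed d) : upperExpectation 𝒬 f x ≤ c :=
  upperExpectation_le hne fun ν hν => by
    have := h𝒬 ν hν
    simpa using integral_mono (hf.integrable_comp (P := ν) (measurable_const_add x))
      (integrable_const c) fun y => h (x + y)

end UpperExpectation

namespace HasFirstMomentLE

variable {d : ℕ} {𝒬 : Set (Measure (Ed d))} {m : ℝ} {f : Ed d → ℝ}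

lemma abs_upperExpectation_sub_le (h𝒬 : HasFirstMomentLE 𝒬 m) (hf : IsC0 f) {c ε C : ℝ}
    (hC : 0 ≤ C) {x : Ed d} (h : ∀ y, |f (x + y) - c| ≤ ε + C * ‖y‖) :
    |upperExpectation 𝒬 f x - c| ≤ ε + C * m := by
  have hclose : ∀ ν ∈ 𝒬, |∫ y, f (x + y) ∂ν - c| ≤ ε + C * m := fun ν hν => by
    have := h𝒬.isProbabilityMeasure ν hν
    have hnorm := (h𝒬.integrable_norm ν hν).const_mul C
    calc |∫ y, f (x + y) ∂ν - c| = |∫ y, (f (x + y) - c) ∂ν| := by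
          rw [integral_sub (hf.integrable_comp (measurable_const_add x)) (integrable_const c)]
          simp
      _ ≤ ∫ y, (ε + C * ‖y‖) ∂ν :=
          (Real.norm_eq_abs _).symm.trans_le <|
            norm_integral_le_of_norm_le ((integrable_const ε).add hnorm) (.of_forall h)
      _ = ε + C * ∫ y, ‖y‖ ∂ν := by
          rw [integral_add (integrable_const ε) hnorm, integral_const_mul]
          simp
      _ ≤ ε + C * m := by
          gcongr
          exact h𝒬.integral_norm_le ν hν
  obtain ⟨ν, hν⟩ := h𝒬.nonempty
  refine abs_le.2 ⟨?_, ?_⟩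
  · linarith [(abs_le.1 (hclose ν hν)).1, le_upperExpectation h𝒬.isProbabilityMeasure hf hν x]
  · have hle : upperExpectation 𝒬 f x ≤ c + (ε + C * m) := upperExpectation_le h𝒬.nonempty
      fun ν hν => by linarith [(abs_le.1 (hclose ν hν)).2]
    linarith

lemma nonneg (h𝒬 : HasFirstMomentLE 𝒬 m) : 0 ≤ m := by
  obtain ⟨ν, hν⟩ := h𝒬.nonempty
  exact (integral_nonneg fun _ => norm_nonneg _).trans (h𝒬.integral_norm_le ν hν)

lemma tendsto_upperExpectation_cocompact (h𝒬 : HasFirstMomentLE 𝒬 m) (hf : IsC0 f) :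
    Tendsto (upperExpectation 𝒬 f) (cocompact (Ed d)) (𝓝 0) := by
  rw [Metric.tendsto_nhds]
  intro ε hε
  have hm := h𝒬.nonneg
  have hC : 0 < ε / 2 / (m + 1) := by positivity
  have hCm : ε / 2 / (m + 1) * m < ε / 2 := by
    rw [div_mul_eq_mul_div, div_lt_iff₀ (by linarith)]
    nlinarith
  filter_upwards [hf.eventually_abs_le_add_mul_norm (half_pos hε) hC] with x hx
  rw [Real.dist_eq]
  linarith [h𝒬.abs_upperExpectation_sub_le hf hC.le (x := x) (c := 0) (by simpa using hx)]

lemma isSublinearMarkov (h𝒬 : HasFirstMomentLE 𝒬 m) :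
    IsSublinearMarkov (upperExpectation 𝒬) where
  map_add_le := upperExpectation_add_le h𝒬.isProbabilityMeasure h𝒬.nonempty
  map_smul _ _ hl := upperExpectation_smul hl
  map_le_const := upperExpectation_le_const h𝒬.isProbabilityMeasure h𝒬.nonempty
  map_translate _ := upperExpectation_comp_add_left
  tendsto_zero := h𝒬.tendsto_upperExpectation_cocompact

end HasFirstMomentLE

/-! ### Adapted convolutions -/

lemma exists_measurable_nat_selection {X β : Type*} [TopologicalSpace X]
    [SecondCountableTopology X] [MeasurableSpace X] [OpensMeasurableSpace X] [Nonempty X]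
    {R : X → β → Prop} (hopen : ∀ b, IsOpen {x | R x b}) (hex : ∀ x, ∃ b, R x b) :
    ∃ (N : ℕ → β) (i : X → ℕ), Measurable i ∧ ∀ x, R x (N (i x)) := by
  classical
  choose b hb using hex
  obtain ⟨s, hs, hcover⟩ :=
    TopologicalSpace.countable_cover_nhds fun x => (hopen (b x)).mem_nhds (hb x)
  have hs_nonempty : s.Nonempty := by
    rw [nonempty_iff_ne_empty]
    rintro rfl
    simpa using (eq_univ_iff_forall.1 hcover) (Classical.arbitrary X)
  obtain ⟨e, rfl⟩ := hs.exists_eq_range hs_nonempty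
  have hindex : ∀ x, ∃ n, R x (b (e n)) := fun x => by
    simpa using (eq_univ_iff_forall.1 hcover) x
  exact ⟨fun n => b (e n), fun x => Nat.find (hindex x),
    measurable_find hindex fun n => (hopen _).measurableSet, fun x => Nat.find_spec (hindex x)⟩

/-- The law of `Y + Z`, where `Y` has law `ν` and, given `Y = y`, `Z` has law `κ y`. For constant
`κ` this is the convolution. -/
def adaptedConv {E : Type*} [MeasurableSpace E] [Add E] (ν : Measure E)
    (κ : ProbabilityTheory.Kernel E E) : Measure E :=
  (ν.compProd κ).map fun z => z.1 + z.2

section AdaptedConv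

open ProbabilityTheory

variable {E : Type*} [MeasurableSpace E] [Add E] [MeasurableAdd₂ E] (ν : Measure E)
  (κ : Kernel E E)

instance [IsProbabilityMeasure ν] [IsMarkovKernel κ] :
    IsProbabilityMeasure (adaptedConv ν κ) :=
  Measure.isProbabilityMeasure_map measurable_add.aemeasurable

lemma lintegral_adaptedConv [SFinite ν] [IsSFiniteKernel κ] {f : E → ℝ≥0∞} (hf : Measurable f) :
    ∫⁻ x, f x ∂(adaptedConv ν κ) = ∫⁻ y, ∫⁻ z, f (y + z) ∂κ y ∂ν := by
  rw [adaptedConv, lintegral_map hf measurable_add,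
    Measure.lintegral_compProd (f := fun z => f (z.1 + z.2)) (hf.comp measurable_add)]

lemma integral_adaptedConv [SFinite ν] [IsSFiniteKernel κ] {f : E → ℝ}
    (hf : Integrable f (adaptedConv ν κ)) :
    ∫ x, f x ∂(adaptedConv ν κ) = ∫ y, ∫ z, f (y + z) ∂κ y ∂ν := by
  rw [adaptedConv, integral_map measurable_add.aemeasurable hf.1,
    Measure.integral_compProd (f := fun z => f (z.1 + z.2)) (hf.comp_measurable measurable_add)]

lemma integrable_integral_of_integrable_adaptedConv [SFinite ν] [IsSFiniteKernel κ] {f : E → ℝ}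
    (hf : Integrable f (adaptedConv ν κ)) : Integrable (fun y => ∫ z, f (y + z) ∂κ y) ν :=
  Integrable.integral_compProd (κ := Kernel.const Unit ν) (η := Kernel.prodMkLeft Unit κ) (a := ())
    (f := fun z => f (z.1 + z.2)) (hf.comp_measurable measurable_add)

end AdaptedConv

section ELpNorm

open ProbabilityTheory

variable {E F : Type*} [MeasurableSpace E] [NormedAddCommGroup F] {ν : Measure E}
  {p C : ℝ≥0∞} {D : E → F}

lemma eLpNorm_comp_fst_compProd [SFinite ν] (hD : StronglyMeasurable D) (κ : Kernel E E)
    [IsMarkovKernel κ] :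
    eLpNorm (fun z => D z.1) p (ν.compProd κ) = eLpNorm D p ν := by
  have hfst : (ν.compProd κ).map Prod.fst = ν := Measure.fst_compProd ν κ
  conv_rhs => rw [← hfst]
  exact (eLpNorm_map_measure hD.aestronglyMeasurable measurable_fst.aemeasurable).symm

lemma eLpNorm_comp_snd_compProd_le [IsProbabilityMeasure ν] (hp : p ≠ ∞)
    (hD : StronglyMeasurable D) {κ : Kernel E E} [IsSFiniteKernel κ]
    (hκ : ∀ y, eLpNorm D p (κ y) ≤ C) :
    eLpNorm (fun z => D z.2) p (ν.compProd κ) ≤ C := by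
  rcases eq_or_ne p 0 with rfl | hp0
  · simp
  have hp_pos : 0 < p.toReal := ENNReal.toReal_pos hp0 hp
  simp only [eLpNorm_eq_lintegral_rpow_enorm_toReal hp0 hp, one_div,
    ENNReal.rpow_inv_le_iff hp_pos] at hκ ⊢
  calc ∫⁻ z, ‖D z.2‖ₑ ^ p.toReal ∂(ν.compProd κ)
      = ∫⁻ y, ∫⁻ z, ‖D z‖ₑ ^ p.toReal ∂κ y ∂ν :=
        Measure.lintegral_compProd (f := fun z => ‖D z.2‖ₑ ^ p.toReal)
          ((hD.comp_measurable measurable_snd).enorm.pow_const _)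
    _ ≤ ∫⁻ _, C ^ p.toReal ∂ν := lintegral_mono hκ
    _ = C ^ p.toReal := by simp

lemma eLpNorm_adaptedConv_le [IsProbabilityMeasure ν] [Add E] [MeasurableAdd₂ E] (hp1 : 1 ≤ p)
    (hp : p ≠ ∞) (hD : StronglyMeasurable D) (hadd : ∀ x y, D (x + y) = D x + D y)
    {κ : Kernel E E} [IsMarkovKernel κ] (hκ : ∀ y, eLpNorm D p (κ y) ≤ C) :
    eLpNorm D p (adaptedConv ν κ) ≤ eLpNorm D p ν + C := by
  have hfst : AEStronglyMeasurable (fun z => D z.1) (ν.compProd κ) :=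
    (hD.comp_measurable measurable_fst).aestronglyMeasurable
  have hsnd : AEStronglyMeasurable (fun z => D z.2) (ν.compProd κ) :=
    (hD.comp_measurable measurable_snd).aestronglyMeasurable
  have hsplit : (D ∘ fun z : E × E => z.1 + z.2) = (fun z => D z.1) + fun z => D z.2 :=
    funext fun z => hadd z.1 z.2
  calc eLpNorm D p (adaptedConv ν κ)
      = eLpNorm ((fun z => D z.1) + fun z => D z.2) p (ν.compProd κ) := by
        rw [adaptedConv, eLpNorm_map_measure hD.aestronglyMeasurable measurable_add.aemeasurable,
          hsplit]
    _ ≤ eLpNorm (fun z => D z.1) p (ν.compProd κ) + eLpNorm (fun z => D z.2) p (ν.compProd κ) := by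
        exact eLpNorm_add_le hfst hsnd hp1
    _ ≤ eLpNorm D p ν + C := by
        rw [eLpNorm_comp_fst_compProd hD κ]
        gcongr
        exact eLpNorm_comp_snd_compProd_le hp hD hκ

end ELpNorm

lemma HasFirstMomentLE.exists_measurable_near_optimal {d : ℕ} {𝒬 : Set (Measure (Ed d))} {m : ℝ}
    (h𝒬 : HasFirstMomentLE 𝒬 m) {f : Ed d → ℝ} (hf : IsC0 f) {ε : ℝ} (hε : 0 < ε) :
    ∃ (N : ℕ → 𝒬) (i : Ed d → ℕ), Measurable i ∧
      ∀ z, upperExpectation 𝒬 f z < ∫ y, f (z + y) ∂(N (i z)).1 + ε := by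
  refine exists_measurable_nat_selection
    (R := fun z (N : 𝒬) => upperExpectation 𝒬 f z < ∫ y, f (z + y) ∂N.1 + ε)
    (fun N => ?_) (fun z => ?_)
  · have := h𝒬.isProbabilityMeasure N N.2
    exact isOpen_lt (h𝒬.isSublinearMarkov.isC0 hf).1
      ((hf.continuous_integral_add N.1).add continuous_const)
  · obtain ⟨_, ⟨N, hN, rfl⟩, hlt⟩ := exists_lt_of_lt_csSup
      (h𝒬.nonempty.image fun ν => ∫ y, f (z + y) ∂ν) (sub_lt_self (upperExpectation 𝒬 f z) hε)
    exact ⟨⟨N, hN⟩, sub_lt_iff_lt_add.1 hlt⟩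

open ProbabilityTheory in
lemma upperExpectation_upperExpectation_le {d : ℕ} {𝒬 𝒬' 𝒬'' : Set (Measure (Ed d))} {m m' : ℝ}
    (h𝒬 : HasFirstMomentLE 𝒬 m) (h𝒬' : HasFirstMomentLE 𝒬' m')
    (h𝒬'' : ∀ ν ∈ 𝒬'', IsProbabilityMeasure ν)
    (hconv : ∀ ν ∈ 𝒬, ∀ N : ℕ → 𝒬', ∀ (i : Ed d → ℕ) (hi : Measurable i),
      adaptedConv ν ((Kernel.ofFunOfCountable fun n => (N n).1).comap i hi) ∈ 𝒬'')
    {f : Ed d → ℝ} (hf : IsC0 f) :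
    upperExpectation 𝒬 (upperExpectation 𝒬' f) ≤ upperExpectation 𝒬'' f := by
  refine fun x => upperExpectation_le h𝒬.nonempty fun ν hν => le_of_forall_pos_le_add fun ε hε => ?_
  have := h𝒬.isProbabilityMeasure ν hν
  obtain ⟨N, i, hi, hNi⟩ := h𝒬'.exists_measurable_near_optimal hf hε
  have hix : Measurable fun y => i (x + y) := hi.comp (measurable_const_add x)
  let κ : Kernel (Ed d) (Ed d) := (Kernel.ofFunOfCountable fun n => (N n).1).comap _ hix
  have : IsMarkovKernel κ := ⟨fun y => h𝒬'.isProbabilityMeasure _ (N (i (x + y))).2⟩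
  have hfκ : Integrable (fun w => f (x + w)) (adaptedConv ν κ) :=
    hf.integrable_comp (measurable_const_add x)
  have hinner := integrable_integral_of_integrable_adaptedConv ν κ hfκ
  have hpoint : ∀ y, upperExpectation 𝒬' f (x + y) ≤ ∫ z, f (x + (y + z)) ∂κ y + ε := fun y => by
    simp only [← add_assoc]
    exact (hNi (x + y)).le
  calc ∫ y, upperExpectation 𝒬' f (x + y) ∂ν
      ≤ ∫ y, (∫ z, f (x + (y + z)) ∂κ y + ε) ∂ν :=
        integral_mono ((h𝒬'.isSublinearMarkov.isC0 hf).integrable_comp (measurable_const_add x))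
          (hinner.add (integrable_const ε)) hpoint
    _ = ∫ w, f (x + w) ∂(adaptedConv ν κ) + ε := by
        rw [integral_adaptedConv ν κ hfκ, integral_add hinner (integrable_const ε)]
        simp
    _ ≤ upperExpectation 𝒬'' f x + ε := by
        gcongr
        exact le_upperExpectation h𝒬'' hf (hconv ν hν N _ hix) x

/-! ### Wasserstein balls -/

/-- The extended-real-valued `p`-Wasserstein distance: `Wp p` is its real part, which is the junk
value `0` when the distance is infinite. -/
def eWp {d : ℕ} (p : ℝ≥0∞) (μ ν : Measure (Ed d)) : ℝ≥0∞ :=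
  ⨅ γ ∈ {γ : Measure (Ed d × Ed d) | IsCoupling γ μ ν}, eLpNorm (fun q => q.2 - q.1) p γ

section ExponentConversion

variable {d : ℕ} {p : ℝ}

lemma lintegral_nnnorm_rpow_eq_eLpNorm {Ω : Type*} [MeasurableSpace Ω] (hp : 0 < p)
    (P : Measure Ω) (D : Ω → Ed d) :
    (∫⁻ q, (‖D q‖₊ : ℝ≥0∞) ^ p ∂P) ^ (1 / p) = eLpNorm D (ENNReal.ofReal p) P := by
  rw [eLpNorm_eq_lintegral_rpow_enorm_toReal (by simpa using hp) ENNReal.ofReal_ne_top,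
    ENNReal.toReal_ofReal hp.le]
  rfl

lemma Wp_eq_toReal_eWp (hp : 0 < p) (μ ν : Measure (Ed d)) :
    Wp p μ ν = (eWp (ENNReal.ofReal p) μ ν).toReal := by
  simp only [Wp, eWp, ← lintegral_nnnorm_rpow_eq_eLpNorm hp]

lemma memPp_iff (hp : 0 < p) {μ : Measure (Ed d)} :
    MemPp p μ ↔ IsProbabilityMeasure μ ∧ MemLp (fun x => x) (ENNReal.ofReal p) μ := by
  rw [MemPp, MemLp, ← lintegral_nnnorm_rpow_eq_eLpNorm hp,
    ENNReal.rpow_lt_top_iff_of_pos (by positivity)]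
  simp only [show AEStronglyMeasurable (fun x => x) μ from aestronglyMeasurable_id, true_and]

end ExponentConversion

namespace IsCoupling

variable {d : ℕ} {p : ℝ≥0∞} {μ ν : Measure (Ed d)} {γ : Measure (Ed d × Ed d)}

lemma isProbabilityMeasure [IsProbabilityMeasure μ] (hγ : IsCoupling γ μ ν) :
    IsProbabilityMeasure γ := by
  have : IsProbabilityMeasure (γ.map Prod.fst) := hγ.1 ▸ inferInstance
  exact Measure.isProbabilityMeasure_of_map (Prod.fst : Ed d × Ed d → Ed d)

lemma diag (μ : Measure (Ed d)) : IsCoupling (μ.map fun x => (x, x)) μ μ := by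
  constructor <;> rw [Measure.map_map (by fun_prop) (by fun_prop)] <;> exact Measure.map_id

lemma prod (μ ν : Measure (Ed d)) [IsProbabilityMeasure μ] [IsProbabilityMeasure ν] :
    IsCoupling (μ.prod ν) μ ν :=
  ⟨by simp, by simp⟩

lemma swap (hγ : IsCoupling γ μ ν) : IsCoupling (γ.map Prod.swap) ν μ := by
  constructor <;> rw [Measure.map_map (by fun_prop) (by fun_prop)]
  exacts [hγ.2, hγ.1]

lemma eLpNorm_fst (hγ : IsCoupling γ μ ν) :
    eLpNorm Prod.fst p γ = eLpNorm (fun x => x) p μ := by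
  rw [← hγ.1, eLpNorm_map_measure (by fun_prop) (by fun_prop)]
  rfl

lemma eLpNorm_snd (hγ : IsCoupling γ μ ν) :
    eLpNorm Prod.snd p γ = eLpNorm (fun x => x) p ν := by
  rw [← hγ.2, eLpNorm_map_measure (by fun_prop) (by fun_prop)]
  rfl

end IsCoupling

section EWp

variable {d : ℕ} {p : ℝ≥0∞} {μ ν : Measure (Ed d)}

lemma eWp_le_of_isCoupling {γ : Measure (Ed d × Ed d)} (hγ : IsCoupling γ μ ν) :
    eWp p μ ν ≤ eLpNorm (fun q => q.2 - q.1) p γ :=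
  iInf₂_le γ hγ

lemma exists_isCoupling_of_eWp_lt {r : ℝ≥0∞} (h : eWp p μ ν < r) :
    ∃ γ, IsCoupling γ μ ν ∧ eLpNorm (fun q => q.2 - q.1) p γ < r := by
  simpa only [eWp, iInf_lt_iff, mem_ofPred_eq, exists_prop] using h

lemma eWp_self (μ : Measure (Ed d)) : eWp p μ μ = 0 := by
  refine le_antisymm ((eWp_le_of_isCoupling (IsCoupling.diag μ)).trans_eq ?_) zero_le
  rw [eLpNorm_map_measure (by fun_prop) (by fun_prop)]
  simp [Function.comp_def]

lemma eWp_le_eLpNorm_id_add (hp : 1 ≤ p) [IsProbabilityMeasure μ] [IsProbabilityMeasure ν] :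
    eWp p μ ν ≤ eLpNorm (fun x => x) p ν + eLpNorm (fun x => x) p μ := by
  have hγ := IsCoupling.prod μ ν
  rw [← hγ.eLpNorm_fst, ← hγ.eLpNorm_snd]
  exact (eWp_le_of_isCoupling hγ).trans (eLpNorm_sub_le (by fun_prop) (by fun_prop) hp)

lemma eLpNorm_id_le_add_eWp (hp : 1 ≤ p) :
    eLpNorm (fun x => x) p ν ≤ eLpNorm (fun x => x) p μ + eWp p μ ν := by
  refine ENNReal.le_of_forall_pos_le_add fun ε hε hfin => ?_
  have hW : eWp p μ ν ≠ ∞ := (ENNReal.add_lt_top.1 hfin).2.ne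
  obtain ⟨γ, hγ, hcost⟩ := exists_isCoupling_of_eWp_lt
    (ENNReal.lt_add_right hW (ENNReal.coe_ne_zero.2 hε.ne'))
  calc eLpNorm (fun x => x) p ν = eLpNorm (Prod.fst + fun q => q.2 - q.1) p γ := by
        rw [← hγ.eLpNorm_snd]
        congr 1
        ext1 q
        simp
    _ ≤ eLpNorm Prod.fst p γ + eLpNorm (fun q => q.2 - q.1) p γ := by
        exact eLpNorm_add_le (by fun_prop) (by fun_prop) hp
    _ ≤ eLpNorm (fun x => x) p μ + eWp p μ ν + ε := by
        rw [hγ.eLpNorm_fst, add_assoc]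
        gcongr

lemma eWp_comm_le (μ ν : Measure (Ed d)) : eWp p ν μ ≤ eWp p μ ν :=
  le_iInf₂ fun γ hγ => (eWp_le_of_isCoupling (IsCoupling.swap hγ)).trans_eq <| by
    rw [eLpNorm_map_measure (by fun_prop) (by fun_prop)]
    exact eLpNorm_sub_comm Prod.fst Prod.snd p γ

lemma eLpNorm_id_dirac_zero : eLpNorm (fun x => x) p (Measure.dirac (0 : Ed d)) = 0 :=
  (eLpNorm_congr_ae (ae_eq_dirac _)).trans eLpNorm_zero'

lemma eLpNorm_id_le_eWp_dirac_zero (hp : 1 ≤ p) (μ : Measure (Ed d)) :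
    eLpNorm (fun x => x) p μ ≤ eWp p μ (Measure.dirac 0) := by
  calc eLpNorm (fun x => x) p μ
      ≤ eLpNorm (fun x => x) p (Measure.dirac (0 : Ed d)) + eWp p (Measure.dirac 0) μ :=
        eLpNorm_id_le_add_eWp hp
    _ ≤ eWp p μ (Measure.dirac 0) := by
        rw [eLpNorm_id_dirac_zero, zero_add]
        exact eWp_comm_le μ _

end EWp

/-- The closed `𝒲_p`-ball of radius `r` around `μ` in `𝒫_p(ℝ^d)`. -/
def WpBall {d : ℕ} (p : ℝ) (μ : Measure (Ed d)) (r : ℝ) : Set (Measure (Ed d)) :=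
  {ν | MemPp p ν ∧ Wp p μ ν ≤ r}

lemma SopD_eq_upperExpectation {d : ℕ} (p δ : ℝ) (μ : Measure (Ed d)) (t : ℝ) :
    SopD p δ μ t = upperExpectation (WpBall p μ (δ * t)) := by
  ext f x
  simp only [SopD, upperExpectation, WpBall, image, mem_ofPred_eq, and_assoc, eq_comm]

section WpBall

variable {d : ℕ} {p r : ℝ} {μ ν : Measure (Ed d)}

lemma eWp_ne_top (hp : 1 ≤ p) (hμ : MemPp p μ) (hν : MemPp p ν) :
    eWp (ENNReal.ofReal p) μ ν ≠ ∞ := by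
  obtain ⟨_, hμp⟩ := (memPp_iff (by linarith)).1 hμ
  obtain ⟨_, hνp⟩ := (memPp_iff (by linarith)).1 hν
  exact ((eWp_le_eLpNorm_id_add (ENNReal.one_le_ofReal.2 hp)).trans_lt
    (ENNReal.add_lt_top.2 ⟨hνp.2, hμp.2⟩)).ne

lemma mem_WpBall_of_eWp_le (hp : 0 < p) (hr : 0 ≤ r) (hν : MemPp p ν)
    (h : eWp (ENNReal.ofReal p) μ ν ≤ ENNReal.ofReal r) : ν ∈ WpBall p μ r :=
  ⟨hν, (Wp_eq_toReal_eWp hp μ ν).trans_le (ENNReal.toReal_le_of_le_ofReal hr h)⟩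

lemma eWp_le_of_mem_WpBall (hp : 1 ≤ p) (hμ : MemPp p μ) (hν : ν ∈ WpBall p μ r) :
    eWp (ENNReal.ofReal p) μ ν ≤ ENNReal.ofReal r := by
  rw [← ENNReal.ofReal_toReal (eWp_ne_top hp hμ hν.1), ← Wp_eq_toReal_eWp (by linarith)]
  exact ENNReal.ofReal_le_ofReal hν.2

lemma memPp_dirac_zero (hp : 0 < p) : MemPp p (Measure.dirac (0 : Ed d)) :=
  (memPp_iff hp).2 ⟨inferInstance, by fun_prop, by simp [eLpNorm_id_dirac_zero]⟩

lemma eLpNorm_id_le_of_mem_WpBall (hp : 1 ≤ p) (hμ : MemPp p μ) (hr : 0 ≤ r)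
    (hν : ν ∈ WpBall p μ r) :
    eLpNorm (fun y => y) (ENNReal.ofReal p) ν ≤
      ENNReal.ofReal (Wp p μ (Measure.dirac 0) + r) := by
  have hp1 : 1 ≤ ENNReal.ofReal p := ENNReal.one_le_ofReal.2 hp
  rw [ENNReal.ofReal_add (by exact ENNReal.toReal_nonneg) hr, Wp_eq_toReal_eWp (by linarith),
    ENNReal.ofReal_toReal (eWp_ne_top hp hμ (memPp_dirac_zero (by linarith)))]
  exact (eLpNorm_id_le_add_eWp hp1).trans
    (add_le_add (eLpNorm_id_le_eWp_dirac_zero hp1 μ) (eWp_le_of_mem_WpBall hp hμ hν))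

lemma hasFirstMomentLE_WpBall (hp : 1 ≤ p) (hμ : MemPp p μ) (hr : 0 ≤ r) :
    HasFirstMomentLE (WpBall p μ r) (Wp p μ (Measure.dirac 0) + r) where
  nonempty := ⟨μ, mem_WpBall_of_eWp_le (by linarith) hr hμ (by simp [eWp_self])⟩
  isProbabilityMeasure _ hν := hν.1.1
  integrable_norm ν hν := by
    obtain ⟨_, hνp⟩ := (memPp_iff (by linarith)).1 hν.1
    exact (hνp.integrable (ENNReal.one_le_ofReal.2 hp)).norm
  integral_norm_le ν hν := by
    have := hν.1.1
    have hmeas : AEStronglyMeasurable (fun y => y) ν := by fun_prop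
    rw [integral_norm_eq_lintegral_enorm hmeas, ← eLpNorm_one_eq_lintegral_enorm]
    refine ENNReal.toReal_le_of_le_ofReal (add_nonneg (by exact ENNReal.toReal_nonneg) hr) ?_
    exact (eLpNorm_le_eLpNorm_of_exponent_le (ENNReal.one_le_ofReal.2 hp) hmeas).trans
      (eLpNorm_id_le_of_mem_WpBall hp hμ hr hν)

end WpBall

section AdaptedCoupling

open ProbabilityTheory

variable {d : ℕ} {μ μ' ν : Measure (Ed d)}

lemma IsCoupling.adaptedConv [SFinite μ'] {γ : Measure (Ed d × Ed d)} [SFinite γ]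
    (hγ : IsCoupling γ μ ν) {κ : Kernel (Ed d) (Ed d)} [IsSFiniteKernel κ]
    {K : Kernel (Ed d) (Ed d × Ed d)} [IsSFiniteKernel K] (hK : ∀ y, IsCoupling (K y) μ' (κ y)) :
    IsCoupling (adaptedConv γ (K.comap Prod.snd measurable_snd)) (μ.conv μ')
      (adaptedConv ν κ) := by
  have : SFinite ν := hγ.2 ▸ inferInstance
  constructor <;> refine Measure.ext_of_lintegral _ fun F hF => ?_
  · rw [lintegral_map hF measurable_fst,
      lintegral_adaptedConv (f := fun a : Ed d × Ed d => F a.1) _ _ (by fun_prop),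
      Measure.lintegral_conv hF, ← hγ.1, lintegral_map (by fun_prop) (by fun_prop)]
    refine lintegral_congr fun q => ?_
    rw [← (hK q.2).1, lintegral_map (by fun_prop) (by fun_prop)]
    rfl
  · rw [lintegral_map hF measurable_snd,
      lintegral_adaptedConv (f := fun a : Ed d × Ed d => F a.2) _ _ (by fun_prop),
      lintegral_adaptedConv _ _ hF, ← hγ.2, lintegral_map (by fun_prop) (by fun_prop)]
    refine lintegral_congr fun q => ?_
    rw [← (hK q.2).2, lintegral_map (by fun_prop) (by fun_prop)]
    rfl

lemma eWp_adaptedConv_le {p r s : ℝ≥0∞} (hp1 : 1 ≤ p) (hp : p ≠ ∞) [IsProbabilityMeasure μ]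
    [IsProbabilityMeasure μ'] [IsProbabilityMeasure ν] (hν : eWp p μ ν ≤ r)
    {N : ℕ → Measure (Ed d)} [∀ n, IsProbabilityMeasure (N n)] (hN : ∀ n, eWp p μ' (N n) ≤ s)
    {i : Ed d → ℕ} (hi : Measurable i) :
    eWp p (μ.conv μ') (adaptedConv ν ((Kernel.ofFunOfCountable N).comap i hi)) ≤ r + s := by
  refine ENNReal.le_of_forall_pos_le_add fun ε hε hfin => ?_
  obtain ⟨hr, hs⟩ := ENNReal.add_lt_top.1 hfin
  have hε2 : (ε / 2 : ℝ≥0∞) ≠ 0 := by simp [hε.ne']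
  obtain ⟨γ, hγ, hγr⟩ :=
    exists_isCoupling_of_eWp_lt (hν.trans_lt (ENNReal.lt_add_right hr.ne hε2))
  choose Γ hΓ hΓs using fun n =>
    exists_isCoupling_of_eWp_lt ((hN n).trans_lt (ENNReal.lt_add_right hs.ne hε2))
  have := hγ.isProbabilityMeasure
  have hΓ_prob := fun n => (hΓ n).isProbabilityMeasure
  let κ : Kernel (Ed d) (Ed d) := (Kernel.ofFunOfCountable N).comap i hi
  let K : Kernel (Ed d) (Ed d × Ed d) := (Kernel.ofFunOfCountable Γ).comap i hi
  have : IsMarkovKernel κ := ⟨fun y => inferInstanceAs (IsProbabilityMeasure (N (i y)))⟩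
  have : IsMarkovKernel K := ⟨fun y => hΓ_prob (i y)⟩
  calc eWp p (μ.conv μ') (adaptedConv ν κ)
      ≤ eLpNorm (fun q => q.2 - q.1) p (adaptedConv γ (K.comap Prod.snd measurable_snd)) :=
        eWp_le_of_isCoupling (hγ.adaptedConv fun y => hΓ (i y))
    _ ≤ eLpNorm (fun q => q.2 - q.1) p γ + (s + ε / 2) :=
        eLpNorm_adaptedConv_le hp1 hp (by fun_prop) (fun x y => add_sub_add_comm _ _ _ _)
          fun q => (hΓs (i q.2)).le
    _ ≤ r + ε / 2 + (s + ε / 2) := by gcongr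
    _ = r + s + ε := by rw [add_add_add_comm, ENNReal.add_halves]

lemma adaptedConv_mem_WpBall {p r s : ℝ} (hp : 1 ≤ p) (hr : 0 ≤ r) (hs : 0 ≤ s)
    (hμ : MemPp p μ) (hμ' : MemPp p μ') (hν : ν ∈ WpBall p μ r) (N : ℕ → WpBall p μ' s)
    {i : Ed d → ℕ} (hi : Measurable i) :
    adaptedConv ν ((Kernel.ofFunOfCountable fun n => (N n).1).comap i hi) ∈
      WpBall p (μ.conv μ') (r + s) := by
  have hp1 : 1 ≤ ENNReal.ofReal p := ENNReal.one_le_ofReal.2 hp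
  have := hμ.1
  have := hμ'.1
  have := hν.1.1
  have hN_prob : ∀ n, IsProbabilityMeasure (N n).1 := fun n => (N n).2.1.1
  let κ : Kernel (Ed d) (Ed d) := (Kernel.ofFunOfCountable fun n => (N n).1).comap i hi
  have : IsMarkovKernel κ := ⟨fun y => hN_prob (i y)⟩
  have hmoment := eLpNorm_adaptedConv_le hp1 ENNReal.ofReal_ne_top stronglyMeasurable_id
    (fun _ _ => rfl) (ν := ν) (κ := κ) fun y => eLpNorm_id_le_of_mem_WpBall hp hμ' hs (N (i y)).2
  refine mem_WpBall_of_eWp_le (by linarith) (add_nonneg hr hs) ?_ ?_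
  · refine (memPp_iff (by linarith)).2 ⟨inferInstanceAs (IsProbabilityMeasure (adaptedConv ν κ)),
      by fun_prop, hmoment.trans_lt (ENNReal.add_lt_top.2 ⟨?_, ENNReal.ofReal_lt_top⟩)⟩
    exact ((memPp_iff (by linarith)).1 hν.1).2.2
  · rw [ENNReal.ofReal_add hr hs]
    exact eWp_adaptedConv_le hp1 ENNReal.ofReal_ne_top (eWp_le_of_mem_WpBall hp hμ hν)
      (fun n => eWp_le_of_mem_WpBall hp hμ' (N n).2) hi

end AdaptedCoupling

section SopD

variable {d : ℕ} {p δ s t : ℝ} {μ μ' : Measure (Ed d)} {f : Ed d → ℝ}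

lemma isSublinearMarkov_SopD (hp : 1 ≤ p) (hδ : 0 ≤ δ) (ht : 0 ≤ t) (hμ : MemPp p μ) :
    IsSublinearMarkov (SopD p δ μ t) := by
  rw [SopD_eq_upperExpectation]
  exact (hasFirstMomentLE_WpBall hp hμ (mul_nonneg hδ ht)).isSublinearMarkov

lemma SopD_SopD_le (hp : 1 ≤ p) (hδ : 0 ≤ δ) (hs : 0 ≤ s) (ht : 0 ≤ t) (hμ : MemPp p μ)
    (hμ' : MemPp p μ') (hf : IsC0 f) :
    SopD p δ μ s (SopD p δ μ' t f) ≤ SopD p δ (μ.conv μ') (s + t) f := by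
  have hδs : 0 ≤ δ * s := mul_nonneg hδ hs
  have hδt : 0 ≤ δ * t := mul_nonneg hδ ht
  simp only [SopD_eq_upperExpectation, mul_add]
  exact upperExpectation_upperExpectation_le (hasFirstMomentLE_WpBall hp hμ hδs)
    (hasFirstMomentLE_WpBall hp hμ' hδt) (fun _ hν => hν.1.1)
    (fun _ hν N _ hi => adaptedConv_mem_WpBall hp hδs hδt hμ hμ' hν N hi) hf

lemma abs_SopD_sub_le (hp : 1 ≤ p) (hδ : 0 ≤ δ) (ht : 0 ≤ t) (hμ : MemPp p μ) (hf : IsC0 f)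
    {ε C : ℝ} (hC : 0 ≤ C) (hfC : ∀ a b, |f a - f b| ≤ ε + C * ‖a - b‖) (x : Ed d) :
    |SopD p δ μ t f x - f x| ≤ ε + C * (Wp p μ (Measure.dirac 0) + δ * t) := by
  rw [SopD_eq_upperExpectation]
  exact (hasFirstMomentLE_WpBall hp hμ (mul_nonneg hδ ht)).abs_upperExpectation_sub_le hf hC
    fun y => by simpa using hfC (x + y) x

lemma tendsto_Wp_dirac_zero {μ : ℝ → Measure (Ed d)} (hp : 0 < p) (hμ : μ 0 = Measure.dirac 0)
    (hμ0 : WContinuousAtZero p μ) :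
    Tendsto (fun t => Wp p (μ t) (Measure.dirac 0)) (𝓝[≥] 0) (𝓝 0) := by
  have hzero : Wp p (μ 0) (Measure.dirac 0) = 0 := by
    rw [hμ, Wp_eq_toReal_eWp hp, eWp_self, ENNReal.toReal_zero]
  have hcont : ContinuousWithinAt (fun t => Wp p (μ t) (Measure.dirac 0)) (Ioi 0) 0 := by
    rwa [ContinuousWithinAt, hzero]
  simpa only [ContinuousWithinAt, hzero] using continuousWithinAt_Ioi_iff_Ici.1 hcont

lemma tendstoUniformly_SopD {μ : ℝ → Measure (Ed d)} (hp : 1 ≤ p) (hδ : 0 ≤ δ)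
    (hμ : IsConvSemigroup p μ) (hμ0 : WContinuousAtZero p μ) (hf : IsC0 f) :
    TendstoUniformly (fun h => SopD p δ (μ h) h f) f (𝓝[≥] 0) := by
  rw [Metric.tendstoUniformly_iff]
  intro ε hε
  obtain ⟨C, hC, hfC⟩ := hf.exists_abs_sub_le_add_mul_norm (half_pos hε)
  have hmoment : Tendsto (fun h => C * (Wp p (μ h) (Measure.dirac 0) + δ * h)) (𝓝[≥] 0) (𝓝 0) := by
    have hδh : Tendsto (fun h => δ * h) (𝓝[≥] 0) (𝓝 (δ * 0)) :=
      tendsto_nhdsWithin_of_tendsto_nhds ((continuous_const_mul δ).tendsto 0)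
    simpa using ((tendsto_Wp_dirac_zero (by linarith) hμ.1 hμ0).add hδh).const_mul C
  filter_upwards [hmoment.eventually_lt_const (half_pos hε), self_mem_nhdsWithin] with h hh h0 x
  rw [dist_comm, Real.dist_eq]
  linarith [abs_SopD_sub_le hp hδ h0 (hμ.2.2 h h0) hf hC hfC x]

end SopD

/-! ### Dyadic limits of sub-semigroups -/

/-- A family of sublinear Markov operators indexed by time which is a semigroup up to an
inequality: making one long step dominates making two short ones. -/
structure IsSubSemigroup {d : ℕ} (S : ℝ → (Ed d → ℝ) → Ed d → ℝ) : Prop where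
  isSublinearMarkov : ∀ {t}, 0 ≤ t → IsSublinearMarkov (S t)
  map_map_le : ∀ {s t}, 0 ≤ s → 0 ≤ t → ∀ {f}, IsC0 f → S s (S t f) ≤ S (s + t) f

/-- The time `t - ⌊2ⁿt⌋2⁻ⁿ` left over after as many steps of length `2⁻ⁿ` as fit into `[0, t]`. -/
def dyadicRemainder (n : ℕ) (t : ℝ) : ℝ :=
  t - ⌊(2 : ℝ) ^ n * t⌋₊ * ((2 : ℝ) ^ n)⁻¹

/-- The operator `𝒮ⁿ(t)` for a general family `S` of one-step operators: `⌊2ⁿt⌋` steps of length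
`2⁻ⁿ`, preceded by one step over the remaining time. -/
def dyadicIterate {d : ℕ} (S : ℝ → (Ed d → ℝ) → Ed d → ℝ) (n : ℕ) (t : ℝ) (f : Ed d → ℝ) :
    Ed d → ℝ :=
  (S ((2 : ℝ) ^ n)⁻¹)^[⌊(2 : ℝ) ^ n * t⌋₊] (S (dyadicRemainder n t) f)

/-- The operator `𝒮(t)` for a general family `S` of one-step operators. The infimum is the limit
of `dyadicIterate S n t f x` as soon as that sequence is antitone and bounded below. -/
def dyadicLimit {d : ℕ} (S : ℝ → (Ed d → ℝ) → Ed d → ℝ) (t : ℝ) (f : Ed d → ℝ) (x : Ed d) : ℝ :=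
  ⨅ n : ℕ, dyadicIterate S n t f x

section Dyadic

variable {s t : ℝ}

lemma dyadicRemainder_nonneg (n : ℕ) (ht : 0 ≤ t) : 0 ≤ dyadicRemainder n t := by
  rw [dyadicRemainder, sub_nonneg, ← div_eq_mul_inv, div_le_iff₀' (by positivity)]
  exact Nat.floor_le (by positivity)

lemma dyadicRemainder_lt (n : ℕ) (t : ℝ) : dyadicRemainder n t < ((2 : ℝ) ^ n)⁻¹ := by
  have hlt : t < (⌊(2 : ℝ) ^ n * t⌋₊ + 1) * ((2 : ℝ) ^ n)⁻¹ := by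
    rw [← div_eq_mul_inv, lt_div_iff₀' (by positivity)]
    exact Nat.lt_floor_add_one _
  rw [dyadicRemainder]
  linarith

lemma tendsto_inv_two_pow : Tendsto (fun n : ℕ => ((2 : ℝ) ^ n)⁻¹) atTop (𝓝[≥] 0) :=
  tendsto_nhdsWithin_iff.2
    ⟨tendsto_inv_atTop_zero.comp (tendsto_pow_atTop_atTop_of_one_lt one_lt_two),
      .of_forall fun _ => mem_Ici.2 (by positivity)⟩

lemma tendsto_dyadicRemainder (ht : 0 ≤ t) :
    Tendsto (fun n => dyadicRemainder n t) atTop (𝓝[≥] 0) :=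
  tendsto_nhdsWithin_iff.2
    ⟨squeeze_zero (fun n => dyadicRemainder_nonneg n ht) (fun n => (dyadicRemainder_lt n t).le)
      (tendsto_nhds_of_tendsto_nhdsWithin tendsto_inv_two_pow),
      .of_forall fun n => dyadicRemainder_nonneg n ht⟩

lemma floor_add_eq_or {a b : ℝ} (ha : 0 ≤ a) (hb : 0 ≤ b) :
    ⌊a + b⌋₊ = ⌊a⌋₊ + ⌊b⌋₊ ∨ ⌊a + b⌋₊ = ⌊a⌋₊ + ⌊b⌋₊ + 1 := by
  have hle : ⌊a⌋₊ + ⌊b⌋₊ ≤ ⌊a + b⌋₊ :=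
    Nat.le_floor (by push_cast; exact add_le_add (Nat.floor_le ha) (Nat.floor_le hb))
  have hlt : ⌊a + b⌋₊ < ⌊a⌋₊ + ⌊b⌋₊ + 2 := by
    rw [Nat.floor_lt (by positivity)]
    push_cast
    linarith [Nat.lt_floor_add_one a, Nat.lt_floor_add_one b]
  omega

end Dyadic

lemma IsSublinearMarkov.iterate_two_mul_le {d : ℕ} {A B : (Ed d → ℝ) → Ed d → ℝ}
    (hA : IsSublinearMarkov A) (hB : IsSublinearMarkov B)
    (hAB : ∀ {g}, IsC0 g → A (A g) ≤ B g) (k : ℕ) {f : Ed d → ℝ} (hf : IsC0 f) :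
    A^[2 * k] f ≤ B^[k] f := by
  induction k generalizing f with
  | zero => exact le_rfl
  | succ k ih =>
    calc A^[2 * (k + 1)] f = A^[2 * k] (A (A f)) := rfl
      _ ≤ A^[2 * k] (B f) :=
        (hA.iterate _).map_mono (hA.isC0 (hA.isC0 hf)) (hB.isC0 hf) (hAB hf)
      _ ≤ B^[k] (B f) := ih (hB.isC0 hf)

lemma tendstoUniformly_iterate_of_le_one {d : ℕ} {S : ℝ → (Ed d → ℝ) → Ed d → ℝ} {f : Ed d → ℝ}
    (hS0 : TendstoUniformly (fun h => S h f) f (𝓝[≥] 0)) {j : ℕ → ℕ} (hj : ∀ n, j n ≤ 1) :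
    TendstoUniformly (fun n : ℕ => (S ((2 : ℝ) ^ n)⁻¹)^[j n] f) f atTop := by
  intro U hU
  filter_upwards [tendsto_inv_two_pow.eventually (hS0 U hU)] with n hn x
  rcases Nat.le_one_iff_eq_zero_or_eq_one.1 (hj n) with hj | hj <;> rw [hj]
  · exact refl_mem_uniformity hU
  · exact hn x

namespace IsSubSemigroup

variable {d : ℕ} {S : ℝ → (Ed d → ℝ) → Ed d → ℝ} {s t : ℝ} {f : Ed d → ℝ}

lemma isSublinearMarkov_inv_two_pow (hS : IsSubSemigroup S) (n : ℕ) :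
    IsSublinearMarkov (S ((2 : ℝ) ^ n)⁻¹) :=
  hS.isSublinearMarkov (by positivity)

lemma isSublinearMarkov_dyadicIterate (hS : IsSubSemigroup S) (n : ℕ) (ht : 0 ≤ t) :
    IsSublinearMarkov (dyadicIterate S n t) :=
  ((hS.isSublinearMarkov_inv_two_pow n).iterate _).comp
    (hS.isSublinearMarkov (dyadicRemainder_nonneg n ht))

lemma dyadicIterate_succ_le (hS : IsSubSemigroup S) (n : ℕ) (ht : 0 ≤ t) (hf : IsC0 f) :
    dyadicIterate S (n + 1) t f ≤ dyadicIterate S n t f := by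
  have hr := dyadicRemainder_nonneg n ht
  have hr' := dyadicRemainder_nonneg (n + 1) ht
  have hA := hS.isSublinearMarkov_inv_two_pow (n + 1)
  have hdouble : ((2 : ℝ) ^ n)⁻¹ = ((2 : ℝ) ^ (n + 1))⁻¹ + ((2 : ℝ) ^ (n + 1))⁻¹ := by
    rw [pow_succ]; field_simp; norm_num
  set k := ⌊(2 : ℝ) ^ n * t⌋₊ with hk
  have hcoarse : (S ((2 : ℝ) ^ (n + 1))⁻¹)^[2 * k] (S (dyadicRemainder n t) f) ≤
      dyadicIterate S n t f :=
    hA.iterate_two_mul_le (hS.isSublinearMarkov_inv_two_pow n)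
      (fun hg => hdouble ▸ hS.map_map_le (by positivity) (by positivity) hg) k
      ((hS.isSublinearMarkov hr).isC0 hf)
  refine le_trans ?_ hcoarse
  have hfloor : ⌊(2 : ℝ) ^ (n + 1) * t⌋₊ = 2 * k ∨ ⌊(2 : ℝ) ^ (n + 1) * t⌋₊ = 2 * k + 1 := by
    rw [pow_succ, mul_assoc, mul_left_comm, two_mul, two_mul]
    exact floor_add_eq_or (by positivity) (by positivity)
  rcases hfloor with hfloor | hfloor
  · have hrem : dyadicRemainder (n + 1) t = dyadicRemainder n t := by
      rw [dyadicRemainder, dyadicRemainder, hfloor, hdouble, ← hk]; push_cast; ring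
    rw [dyadicIterate, hfloor, hrem]
  · have hrem : ((2 : ℝ) ^ (n + 1))⁻¹ + dyadicRemainder (n + 1) t = dyadicRemainder n t := by
      rw [dyadicRemainder, dyadicRemainder, hfloor, hdouble, ← hk]; push_cast; ring
    have hC0 := (hS.isSublinearMarkov hr').isC0 hf
    rw [dyadicIterate, hfloor, Function.iterate_succ_apply]
    refine (hA.iterate _).map_mono (hA.isC0 hC0) ((hS.isSublinearMarkov hr).isC0 hf) ?_
    exact hrem ▸ hS.map_map_le (by positivity) hr' hf

lemma antitone_dyadicIterate (hS : IsSubSemigroup S) (ht : 0 ≤ t) (hf : IsC0 f) (x : Ed d) :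
    Antitone fun n => dyadicIterate S n t f x :=
  antitone_nat_of_succ_le fun n => hS.dyadicIterate_succ_le n ht hf x

lemma bddBelow_dyadicIterate (hS : IsSubSemigroup S) (ht : 0 ≤ t) (hf : IsC0 f) (x : Ed d) :
    BddBelow (range fun n => dyadicIterate S n t f x) := by
  refine ⟨-dyadicIterate S 0 t (-f) x, forall_mem_range.2 fun n => ?_⟩
  exact (neg_le_neg (hS.antitone_dyadicIterate ht hf.neg x n.zero_le)).trans
    ((hS.isSublinearMarkov_dyadicIterate n ht).neg_map_neg_le hf x)

lemma tendsto_dyadicIterate (hS : IsSubSemigroup S) (ht : 0 ≤ t) (hf : IsC0 f) (x : Ed d) :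
    Tendsto (fun n => dyadicIterate S n t f x) atTop (𝓝 (dyadicLimit S t f x)) :=
  tendsto_atTop_ciInf (hS.antitone_dyadicIterate ht hf x) (hS.bddBelow_dyadicIterate ht hf x)

lemma isSublinearMarkov_dyadicLimit (hS : IsSubSemigroup S) (ht : 0 ≤ t) :
    IsSublinearMarkov (dyadicLimit S t) :=
  .of_antitone_tendsto (hS.isSublinearMarkov_dyadicIterate · ht) (hS.antitone_dyadicIterate ht)
    (hS.tendsto_dyadicIterate ht)

lemma tendstoUniformly_dyadicIterate (hS : IsSubSemigroup S) (ht : 0 ≤ t) (hf : IsC0 f) :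
    TendstoUniformly (fun n => dyadicIterate S n t f) (dyadicLimit S t f) atTop :=
  have hC0 (n : ℕ) := (hS.isSublinearMarkov_dyadicIterate n ht).isC0 hf
  have hlimC0 := (hS.isSublinearMarkov_dyadicLimit ht).isC0 hf
  tendstoUniformly_of_antitone_of_tendsto_cocompact (fun n => (hC0 n).1) hlimC0.1
    (hS.antitone_dyadicIterate ht hf) (hS.tendsto_dyadicIterate ht hf) (hC0 0).2 hlimC0.2

lemma tendstoUniformly_iterate (hS : IsSubSemigroup S)
    (hS0 : TendstoUniformly (fun h => S h f) f (𝓝[≥] 0)) (ht : 0 ≤ t) (hf : IsC0 f) :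
    TendstoUniformly (fun n : ℕ => (S ((2 : ℝ) ^ n)⁻¹)^[⌊(2 : ℝ) ^ n * t⌋₊] f)
      (dyadicLimit S t f) atTop := by
  have hrem : TendstoUniformly (fun n => S (dyadicRemainder n t) f) f atTop := fun U hU =>
    (tendsto_dyadicRemainder ht).eventually (hS0 U hU)
  have hdiff := IsSublinearMarkov.tendstoUniformly_map_sub_map
    (fun n : ℕ => (hS.isSublinearMarkov_inv_two_pow n).iterate ⌊(2 : ℝ) ^ n * t⌋₊)
    (fun n => (hS.isSublinearMarkov (dyadicRemainder_nonneg n ht)).isC0 hf) hf hrem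
  have hsub := (hS.tendstoUniformly_dyadicIterate ht hf).sub hdiff
  rw [sub_zero] at hsub
  convert hsub using 2 with n
  exact (_root_.sub_sub_cancel _ _).symm

lemma tendstoUniformly_iterate_add_dyadicLimit_dyadicLimit (hS : IsSubSemigroup S)
    (hS0 : ∀ {f}, IsC0 f → TendstoUniformly (fun h => S h f) f (𝓝[≥] 0)) (hs : 0 ≤ s)
    (ht : 0 ≤ t) (hf : IsC0 f) :
    TendstoUniformly
      (fun n : ℕ => (S ((2 : ℝ) ^ n)⁻¹)^[⌊(2 : ℝ) ^ n * t⌋₊ + ⌊(2 : ℝ) ^ n * s⌋₊] f)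
      (dyadicLimit S t (dyadicLimit S s f)) atTop := by
  have hlimC0 := (hS.isSublinearMarkov_dyadicLimit hs).isC0 hf
  have hdiff := IsSublinearMarkov.tendstoUniformly_map_sub_map
    (fun n : ℕ => (hS.isSublinearMarkov_inv_two_pow n).iterate ⌊(2 : ℝ) ^ n * t⌋₊)
    (fun n => ((hS.isSublinearMarkov_inv_two_pow n).iterate _).isC0 hf) hlimC0
    (hS.tendstoUniformly_iterate (hS0 hf) hs hf)
  have hadd := hdiff.add (hS.tendstoUniformly_iterate (hS0 hlimC0) ht hlimC0)
  rw [zero_add] at hadd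
  convert hadd using 2 with n
  simp only [Pi.add_apply, sub_add_cancel, Function.iterate_add_apply]

lemma tendstoUniformly_iterate_add_dyadicLimit_add (hS : IsSubSemigroup S)
    (hS0 : TendstoUniformly (fun h => S h f) f (𝓝[≥] 0)) (hs : 0 ≤ s) (ht : 0 ≤ t)
    (hf : IsC0 f) :
    TendstoUniformly
      (fun n : ℕ => (S ((2 : ℝ) ^ n)⁻¹)^[⌊(2 : ℝ) ^ n * t⌋₊ + ⌊(2 : ℝ) ^ n * s⌋₊] f)
      (dyadicLimit S (t + s) f) atTop := by
  have hfloor (n : ℕ) : ∃ j ≤ 1,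
      ⌊(2 : ℝ) ^ n * (t + s)⌋₊ = ⌊(2 : ℝ) ^ n * t⌋₊ + ⌊(2 : ℝ) ^ n * s⌋₊ + j := by
    rw [mul_add]
    rcases floor_add_eq_or (a := (2 : ℝ) ^ n * t) (b := (2 : ℝ) ^ n * s)
      (by positivity) (by positivity) with h | h
    exacts [⟨0, zero_le_one, h⟩, ⟨1, le_rfl, h⟩]
  choose j hj hjfloor using hfloor
  have hA (n : ℕ) := hS.isSublinearMarkov_inv_two_pow n
  have hdiff := IsSublinearMarkov.tendstoUniformly_map_sub_map
    (fun n => (hA n).iterate (⌊(2 : ℝ) ^ n * t⌋₊ + ⌊(2 : ℝ) ^ n * s⌋₊))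
    (fun n => ((hA n).iterate (j n)).isC0 hf) hf (tendstoUniformly_iterate_of_le_one hS0 hj)
  have hsub := (hS.tendstoUniformly_iterate hS0 (add_nonneg ht hs) hf).sub hdiff
  rw [sub_zero] at hsub
  convert hsub using 2 with n
  simp only [Pi.sub_apply, hjfloor, Function.iterate_add_apply, _root_.sub_sub_cancel]

lemma dyadicLimit_dyadicLimit (hS : IsSubSemigroup S)
    (hS0 : ∀ {f}, IsC0 f → TendstoUniformly (fun h => S h f) f (𝓝[≥] 0)) (hs : 0 ≤ s)
    (ht : 0 ≤ t) (hf : IsC0 f) :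
    dyadicLimit S t (dyadicLimit S s f) = dyadicLimit S (t + s) f :=
  funext fun x => tendsto_nhds_unique
    ((hS.tendstoUniformly_iterate_add_dyadicLimit_dyadicLimit hS0 hs ht hf).tendsto_at x)
    ((hS.tendstoUniformly_iterate_add_dyadicLimit_add (hS0 hf) hs ht hf).tendsto_at x)

end IsSubSemigroup

lemma IsConvSemigroup.isSubSemigroup_SopD {d : ℕ} {p δ : ℝ} {μ : ℝ → Measure (Ed d)}
    (hμ : IsConvSemigroup p μ) (hp : 1 ≤ p) (hδ : 0 ≤ δ) :
    IsSubSemigroup fun t => SopD p δ (μ t) t where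
  isSublinearMarkov {t} ht := isSublinearMarkov_SopD hp hδ ht (hμ.2.2 t ht)
  map_map_le {s t} hs ht _ hf := by
    simpa only [hμ.2.1 s t hs ht] using
      SopD_SopD_le hp hδ hs ht (hμ.2.2 s hs) (hμ.2.2 t ht) hf

lemma SiterND_eq_dyadicIterate {d : ℕ} (p δ : ℝ) (μ : ℝ → Measure (Ed d)) :
    SiterND p δ μ = dyadicIterate fun t => SopD p δ (μ t) t :=
  rfl

lemma SlimD_eq_dyadicLimit {d : ℕ} (p δ : ℝ) (μ : ℝ → Measure (Ed d)) :
    SlimD p δ μ = dyadicLimit fun t => SopD p δ (μ t) t :=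
  rfl

lemma abs_sub_le_norm_sub {d : ℕ} (f g : C₀(Ed d, ℝ)) (x : Ed d) : |f x - g x| ≤ ‖f - g‖ := by
  rw [← ZeroAtInftyContinuousMap.norm_toBCF_eq_norm]
  exact (f - g).toBCF.norm_coe_le_norm x

theorem stmt_0_general (d : ℕ) (p : ℝ) (hp : 1 ≤ p) (δ : ℝ) (hδ : 0 ≤ δ)
    (μ : ℝ → Measure (Ed d)) (hμ : IsConvSemigroup p μ) (hμ0 : WContinuousAtZero p μ) :
    ∀ t : ℝ, 0 ≤ t → ∀ f : C₀(Ed d, ℝ),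
      (∀ x, Antitone fun n => SiterND p δ μ n t (⇑f) x) ∧
      (∀ x, Tendsto (fun n => SiterND p δ μ n t (⇑f) x) atTop
        (𝓝 (SlimD p δ μ t (⇑f) x))) ∧
      IsC0 (SlimD p δ μ t (⇑f)) ∧
      (∀ s : ℝ, 0 ≤ s → ∀ x,
        SlimD p δ μ t (SlimD p δ μ s (⇑f)) x = SlimD p δ μ (t + s) (⇑f) x) ∧
      (∀ g : C₀(Ed d, ℝ), ∀ x,
        SlimD p δ μ t (fun y => f y + g y) x ≤
          SlimD p δ μ t (⇑f) x + SlimD p δ μ t (⇑g) x) ∧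
      (∀ l : ℝ, 0 ≤ l → ∀ x,
        SlimD p δ μ t (fun y => l * f y) x = l * SlimD p δ μ t (⇑f) x) ∧
      (∀ g : C₀(Ed d, ℝ), (∀ x, f x ≤ g x) →
        ∀ x, SlimD p δ μ t (⇑f) x ≤ SlimD p δ μ t (⇑g) x) ∧
      (∀ x, SlimD p δ μ t (fun _ => (0:ℝ)) x = 0) ∧
      (∀ g : C₀(Ed d, ℝ), ∀ x,
        |SlimD p δ μ t (⇑f) x - SlimD p δ μ t (⇑g) x| ≤ ‖f - g‖) := by
  intro t ht f
  have hf := IsC0.coe f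
  have hS : IsSubSemigroup fun t => SopD p δ (μ t) t := hμ.isSubSemigroup_SopD hp hδ
  rw [SiterND_eq_dyadicIterate, SlimD_eq_dyadicLimit]
  have hL := hS.isSublinearMarkov_dyadicLimit ht
  exact ⟨hS.antitone_dyadicIterate ht hf, hS.tendsto_dyadicIterate ht hf, hL.isC0 hf,
    fun s hs => congrFun <|
      hS.dyadicLimit_dyadicLimit (tendstoUniformly_SopD hp hδ hμ hμ0) hs ht hf,
    fun g => hL.map_add_le hf (.coe g), fun _ hl => congrFun <| hL.map_smul hf hl,
    fun g => hL.map_mono hf (.coe g), congrFun hL.map_zero,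
    fun g => hL.abs_map_sub_map_le hf (.coe g) (abs_sub_le_norm_sub f g)⟩

/-- the nonlinear semigroup generated by the distributionally robust
random walk with Wasserstein-ball radius `δ·t`: the decreasing pointwise limit
`𝒮(t)f = lim_n 𝒮ⁿ(t)f` exists, `𝒮(t)` maps `C₀(ℝ^d)` to itself, the semigroup property
holds, and each `𝒮(t)` is sublinear, increasing, normalized and contractive. -/
theorem stmt_0 (d : ℕ) (hd : 1 ≤ d) (p : ℝ) (hp : 1 < p) (δ : ℝ) (hδ : 0 ≤ δ)
    (μ : ℝ → Measure (Ed d)) (hμ : IsConvSemigroup p μ) (hμ0 : WContinuousAtZero p μ) :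
    ∀ t : ℝ, 0 ≤ t → ∀ f : C₀(Ed d, ℝ),
      -- the decreasing pointwise limit exists
      (∀ x, Antitone fun n => SiterND p δ μ n t (⇑f) x) ∧
      (∀ x, Tendsto (fun n => SiterND p δ μ n t (⇑f) x) atTop
        (𝓝 (SlimD p δ μ t (⇑f) x))) ∧
      -- (i) `𝒮(t)` maps `C₀(ℝ^d)` to itself and `𝒮(t)(𝒮(s)f) = 𝒮(t+s)f`
      IsC0 (SlimD p δ μ t (⇑f)) ∧
      (∀ s : ℝ, 0 ≤ s → ∀ x,
        SlimD p δ μ t (SlimD p δ μ s (⇑f)) x = SlimD p δ μ (t + s) (⇑f) x) ∧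
      -- (ii) sublinearity
      (∀ g : C₀(Ed d, ℝ), ∀ x,
        SlimD p δ μ t (fun y => f y + g y) x ≤
          SlimD p δ μ t (⇑f) x + SlimD p δ μ t (⇑g) x) ∧
      (∀ l : ℝ, 0 ≤ l → ∀ x,
        SlimD p δ μ t (fun y => l * f y) x = l * SlimD p δ μ t (⇑f) x) ∧
      -- increasing
      (∀ g : C₀(Ed d, ℝ), (∀ x, f x ≤ g x) →
        ∀ x, SlimD p δ μ t (⇑f) x ≤ SlimD p δ μ t (⇑g) x) ∧
      -- maps zero to zero
      (∀ x, SlimD p δ μ t (fun _ => (0:ℝ)) x = 0) ∧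
      -- contractivity
      (∀ g : C₀(Ed d, ℝ), ∀ x,
        |SlimD p δ μ t (⇑f) x - SlimD p δ μ t (⇑g) x| ≤ ‖f - g‖) := by
  exact stmt_0_general d p hp.le δ hδ μ hμ hμ0
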